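/- arXiv:2203.13336 — 3 statements merged into one kernel-verified Lean document; each statement's English description precedes it below -/
import Mathlib

section
/- For every s ∈ ℝ there exists a constant C > 0 (depending only on s) such that for all μ with 0 < μ ≤ 1 and all ξ > 0, one has | d/dξ ( √(T_μ(ξ))·⟨ξ⟩^{s}·(1+μξ²)^{1/4} ) | ≤ C·⟨ξ⟩^{s−1}. -/
/-- The symbol `T_μ(ξ) = tanh(√μ ξ)/(√μ ξ)` for `ξ > 0`. -/
noncomputable def Tpos (μ ξ : ℝ) : ℝ := Real.tanh (Real.sqrt μ * ξ) / (Real.sqrt μ * ξ)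

lemma aux_sinh_le {y : ℝ} (hy : 0 < y) : Real.sinh y ≤ y * Real.cosh y := by
  have hm : MonotoneOn (fun x : ℝ => x * Real.cosh x - Real.sinh x) (Set.Ici 0) := by
    apply monotoneOn_of_deriv_nonneg (convex_Ici 0)
    · fun_prop
    · fun_prop
    · intro x hx
      rw [interior_Ici] at hx
      have h : HasDerivAt (fun x : ℝ => x * Real.cosh x - Real.sinh x)
          (1 * Real.cosh x + x * Real.sinh x - Real.cosh x) x :=
        ((hasDerivAt_id x).mul (Real.hasDerivAt_cosh x)).sub (Real.hasDerivAt_sinh x)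
      rw [h.deriv]
      have h1 := (Real.sinh_pos_iff.2 hx)
      have h2 := mul_pos hx h1
      linarith
  have := hm (Set.mem_Ici.2 le_rfl) (Set.mem_Ici.2 hy.le) hy.le
  simp at this
  linarith

lemma aux_D {y : ℝ} (hy : 0 < y) :
    |1 / (Real.sinh y * Real.cosh y) - 1 / y + y / (1 + y ^ 2)| ≤ 2 / (1 + y) := by
  have hS : 0 < Real.sinh y := Real.sinh_pos_iff.2 hy
  have hC : 1 ≤ Real.cosh y := Real.one_le_cosh y
  have h1 : y ≤ Real.sinh y := Real.self_le_sinh_iff.2 hy.le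
  have h2 := aux_sinh_le hy
  have h3 := Real.cosh_sq y
  set S := Real.sinh y
  set K := Real.cosh y
  have hK : 0 < K := by linarith
  have hSK : 0 < S * K := by positivity
  have e1 : 1 / (S * K) ≤ 1 / y := one_div_le_one_div_of_le hy (by nlinarith)
  have e0 : 0 < 1 / (S * K) := by positivity
  have eq : 1 / y - y / (1 + y ^ 2) = 1 / (y * (1 + y ^ 2)) := by field_simp; ring
  have e2 : y / (1 + y ^ 2) ≤ 2 / (1 + y) := by
    rw [div_le_div_iff₀ (by positivity) (by positivity)]; nlinarith
  rw [abs_le]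
  refine ⟨?_, by linarith⟩
  rcases le_total y 1 with h | h
  · have e3 : 1 / y - y ≤ 1 / (S * K) := by
      have : 1 / y - y = (1 - y ^ 2) / y := by field_simp
      rw [this, div_le_div_iff₀ hy hSK]
      have a1 : S * K ≤ y * K ^ 2 := by nlinarith
      have a2 : (1 - y ^ 2) * K ^ 2 ≤ 1 := by
        have : S ^ 2 ≤ (y * K) ^ 2 := by gcongr
        nlinarith
      have a3 : 0 ≤ 1 - y ^ 2 := by nlinarith
      nlinarith [mul_le_mul_of_nonneg_left a1 a3, mul_le_mul_of_nonneg_left a2 hy.le]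
    have e4 : y ≤ 2 / (1 + y) := by
      rw [le_div_iff₀ (by positivity)]; nlinarith
    have : 0 ≤ y / (1 + y ^ 2) := by positivity
    linarith
  · have e4 : 1 / (y * (1 + y ^ 2)) ≤ 2 / (1 + y) := by
      rw [div_le_div_iff₀ (by positivity) (by positivity)]
      nlinarith [mul_pos hy hy, mul_nonneg hy.le (sq_nonneg y)]
    linarith

lemma aux_h {y : ℝ} (hy : 0 < y) :
    Real.sqrt (Real.tanh y / y) * (1 + y ^ 2) ^ ((1:ℝ)/4) ≤ 2 := by
  have hS : 0 < Real.sinh y := Real.sinh_pos_iff.2 hy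
  have hK : 0 < Real.cosh y := Real.cosh_pos y
  have h2 := aux_sinh_le hy
  have h3 := Real.cosh_sq y
  have ht : Real.tanh y = Real.sinh y / Real.cosh y := Real.tanh_eq_sinh_div_cosh y
  have t0 : 0 < Real.tanh y := by rw [ht]; positivity
  have t1 : Real.tanh y ≤ y := by rw [ht, div_le_iff₀ hK]; exact h2
  have t2 : Real.tanh y ≤ 1 := by rw [ht, div_le_iff₀ hK]; nlinarith
  set t := Real.tanh y
  have q : Real.sqrt (t / y) = ((t / y) ^ 2) ^ ((1:ℝ)/4) := by
    rw [Real.sqrt_eq_rpow, ← Real.rpow_natCast, ← Real.rpow_mul (by positivity)]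
    norm_num
  rw [q, ← Real.mul_rpow (by positivity) (by positivity)]
  have b : (t / y) ^ 2 * (1 + y ^ 2) ≤ 2 := by
    rw [div_pow, div_mul_eq_mul_div, div_le_iff₀ (by positivity)]
    have : t ^ 2 ≤ y ^ 2 := by gcongr
    have : t ^ 2 ≤ 1 := by nlinarith
    nlinarith [mul_le_mul_of_nonneg_right this (sq_nonneg y)]
  calc _ ≤ (2:ℝ) ^ ((1:ℝ)/4) := by gcongr
    _ ≤ (2:ℝ) ^ (1:ℝ) := by gcongr <;> norm_num
    _ = 2 := by simp

lemma aux_deriv (s μ x : ℝ) (hμ : 0 < μ) (hx : 0 < x) :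
    HasDerivAt (fun x : ℝ =>
      Real.sqrt (Tpos μ x) * (1 + x ^ 2) ^ (s/2) * (1 + μ * x ^ 2) ^ ((1:ℝ)/4))
      (Real.sqrt (Tpos μ x) * (1 + x ^ 2) ^ (s/2) * (1 + μ * x ^ 2) ^ ((1:ℝ)/4) *
        (Real.sqrt μ / 2 * (1 / (Real.sinh (Real.sqrt μ * x) * Real.cosh (Real.sqrt μ * x))
          - 1 / (Real.sqrt μ * x) + Real.sqrt μ * x / (1 + (Real.sqrt μ * x) ^ 2))
          + s * x / (1 + x ^ 2))) x := by
  have ha : 0 < Real.sqrt μ := Real.sqrt_pos.2 hμ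
  have hsq : μ = Real.sqrt μ ^ 2 := (Real.sq_sqrt hμ.le).symm
  unfold Tpos
  set a := Real.sqrt μ
  have hy : 0 < a * x := by positivity
  have hS : 0 < Real.sinh (a * x) := Real.sinh_pos_iff.2 hy
  have hK : 0 < Real.cosh (a * x) := Real.cosh_pos _
  have h3 := Real.cosh_sq (a * x)
  have hlin : HasDerivAt (fun x : ℝ => a * x) a x := by
    simpa using (hasDerivAt_id x).const_mul a
  have hT : HasDerivAt (fun x : ℝ => Real.tanh (a * x) / (a * x))
      (Real.tanh (a * x) / (a * x) * (a * (1 / (Real.sinh (a * x) * Real.cosh (a * x))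
          - 1 / (a * x)))) x := by
    simp only [Real.tanh_eq_sinh_div_cosh]
    have := ((hlin.sinh.div hlin.cosh hK.ne').div hlin hy.ne')
    refine this.congr_deriv ?_
    simp only [Pi.div_apply]
    generalize Real.sinh (a * x) = S at *
    generalize Real.cosh (a * x) = K at *
    field_simp
    have h4 : K ^ 2 - S ^ 2 = 1 := by linarith
    rw [h4]
    ring
  have hTpos : 0 < Real.tanh (a * x) / (a * x) := by
    rw [Real.tanh_eq_sinh_div_cosh]; positivity
  have d1 := hT.sqrt hTpos.ne'
  have p1 : 0 < 1 + x ^ 2 := by positivity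
  have p2 : 0 < 1 + μ * x ^ 2 := by positivity
  have q1 : HasDerivAt (fun x : ℝ => 1 + x ^ 2) (2 * x) x := by
    simpa using (hasDerivAt_pow 2 x).const_add 1
  have q2 : HasDerivAt (fun x : ℝ => 1 + μ * x ^ 2) (μ * (2 * x)) x := by
    simpa using ((hasDerivAt_pow 2 x).const_mul μ).const_add 1
  have d2 := q1.rpow_const (p := s/2) (Or.inl p1.ne')
  have d3 := q2.rpow_const (p := (1:ℝ)/4) (Or.inl p2.ne')
  refine ((d1.mul d2).mul d3).congr_deriv ?_
  rw [Real.rpow_sub_one p1.ne', Real.rpow_sub_one p2.ne']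
  have r := Real.mul_self_sqrt hTpos.le
  have rp := Real.sqrt_pos.2 hTpos
  simp only [Pi.mul_apply]
  set R := Real.sqrt (Real.tanh (a * x) / (a * x))
  rw [← r]
  have : (a * x) ^ 2 = μ * x ^ 2 := by rw [hsq]; ring
  rw [this]
  generalize (1 + x ^ 2) ^ (s/2) = A
  generalize (1 + μ * x ^ 2) ^ ((1:ℝ)/4) = B
  generalize 1 / (Real.sinh (a * x) * Real.cosh (a * x)) - 1 / (a * x) = D
  have e : a / 2 * (D + a * x / (1 + μ * x ^ 2)) = a / 2 * D + μ * x / 2 / (1 + μ * x ^ 2) := by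
    have : a * a = μ := by rw [hsq]; ring
    rw [← this]; ring
  rw [e]
  field_simp
  ring

theorem deriv_sqrtT_Js_Jmu_bound (s : ℝ) :
    ∃ C > 0, ∀ μ : ℝ, 0 < μ → μ ≤ 1 → ∀ ξ : ℝ, 0 < ξ →
      |deriv (fun x : ℝ =>
          Real.sqrt (Tpos μ x) * (1 + x ^ 2) ^ (s/2) * (1 + μ * x ^ 2) ^ ((1:ℝ)/4)) ξ| ≤
        C * (1 + ξ ^ 2) ^ ((s - 1)/2) := by
  refine ⟨2 * (1 + |s|), by positivity, ?_⟩
  intro μ hμ hμ1 x hx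
  rw [(aux_deriv s μ x hμ hx).deriv, abs_mul]
  have ha : 0 < Real.sqrt μ := Real.sqrt_pos.2 hμ
  have ha1 : Real.sqrt μ ≤ 1 := Real.sqrt_le_one.2 hμ1
  have hsq : μ * x ^ 2 = (Real.sqrt μ * x) ^ 2 := by rw [mul_pow, Real.sq_sqrt hμ.le]
  unfold Tpos
  rw [hsq]
  have hy : 0 < Real.sqrt μ * x := by positivity
  have hD := aux_D hy
  have hh := aux_h hy
  set a := Real.sqrt μ
  have p1 : 0 < 1 + x ^ 2 := by positivity
  have hJ : (1 + x ^ 2) ^ ((s - 1)/2) = (1 + x ^ 2) ^ (s/2) / Real.sqrt (1 + x ^ 2) := by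
    rw [Real.sqrt_eq_rpow, ← Real.rpow_sub p1]; congr 1; ring
  rw [hJ]
  set J := Real.sqrt (1 + x ^ 2)
  have hJ0 : 0 < J := Real.sqrt_pos.2 p1
  have hJ2 : J ^ 2 = 1 + x ^ 2 := Real.sq_sqrt p1.le
  have hxJ : x ≤ J := by nlinarith
  have hJx : J ≤ 1 + x := by nlinarith
  have hF : |Real.sqrt (Real.tanh (a * x) / (a * x)) * (1 + x ^ 2) ^ (s/2)
      * (1 + (a * x) ^ 2) ^ ((1:ℝ)/4)| ≤ 2 * (1 + x ^ 2) ^ (s/2) := by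
    rw [abs_of_nonneg (by positivity)]
    have := mul_le_mul_of_nonneg_right hh (Real.rpow_nonneg p1.le (s/2))
    linarith
  have hL : |a / 2 * (1 / (Real.sinh (a * x) * Real.cosh (a * x))
          - 1 / (a * x) + a * x / (1 + (a * x) ^ 2)) + s * x / (1 + x ^ 2)| ≤ (1 + |s|) / J := by
    refine (abs_add_le _ _).trans ?_
    rw [abs_mul, abs_of_pos (by positivity : 0 < a / 2), add_div]
    apply add_le_add
    · calc _ ≤ a / 2 * (2 / (1 + a * x)) := by gcongr
        _ = a / (1 + a * x) := by ring
        _ ≤ 1 / J := by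
          rw [div_le_div_iff₀ (by positivity) hJ0]
          nlinarith
    · rw [abs_div, abs_mul, abs_of_pos hx, abs_of_pos p1, div_le_div_iff₀ p1 hJ0, ← hJ2, mul_assoc]
      apply mul_le_mul_of_nonneg_left _ (abs_nonneg s)
      nlinarith
  calc _ ≤ (2 * (1 + x ^ 2) ^ (s/2)) * ((1 + |s|) / J) := by gcongr
    _ = _ := by ring
end

section
/- For every n ∈ ℕ and every β ≥ 0 there exists a constant C > 0 (depending only on n and β) such that for all μ > 0 and all ξ > 0, one has | dⁿ/dξⁿ √(K_μ(ξ)) | ≤ C·μ^{n/2}·(1+μξ²)^{(1−2n)/4}. (Equivalently, |dⁿ/dξⁿ √(K_μ(ξ))| ≲_β μ^{n/2}·⟨√μ ξ⟩^{1/2−n}.) -/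
/-- The full-dispersion symbol `K_μ(ξ) = T_μ(ξ)·(1 + β μ ξ²)` for `ξ > 0`. -/
noncomputable def Kpos (β μ ξ : ℝ) : ℝ := Tpos μ ξ * (1 + β * μ * ξ ^ 2)

open scoped ContDiff

/-- Symbol class of order `m` on `[1, ∞)`. -/
def SymB (m : ℝ) (f : ℝ → ℝ) : Prop :=
  (∀ y : ℝ, 1 ≤ y → ContDiffAt ℝ ∞ f y) ∧
    ∀ n : ℕ, ∃ C : ℝ, ∀ y : ℝ, 1 ≤ y → |iteratedDeriv n f y| ≤ C * y ^ (m - (n : ℝ))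

lemma cdn {f : ℝ → ℝ} {y : ℝ} (h : ContDiffAt ℝ ∞ f y) (n : ℕ) : ContDiffAt ℝ n f y :=
  h.of_le (by exact_mod_cast le_top)

lemma bound_nonneg {C a y p : ℝ} (hy : 1 ≤ y) (h : |a| ≤ C * y ^ p) : 0 ≤ C := by
  have h1 : 0 < y ^ p := Real.rpow_pos_of_pos (by linarith) _
  have h2 : 0 ≤ C * y ^ p := (abs_nonneg a).trans h
  exact nonneg_of_mul_nonneg_left h2 h1

lemma SymB.mono {m m' : ℝ} {f : ℝ → ℝ} (h : SymB m f) (hm : m ≤ m') : SymB m' f := by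
  refine ⟨h.1, fun n => ?_⟩
  obtain ⟨C, hC⟩ := h.2 n
  refine ⟨C, fun y hy => (hC y hy).trans ?_⟩
  have := bound_nonneg hy (hC y hy)
  gcongr

lemma SymB.add {m : ℝ} {f g : ℝ → ℝ} (hf : SymB m f) (hg : SymB m g) :
    SymB m (fun y => f y + g y) := by
  refine ⟨fun y hy => (hf.1 y hy).add (hg.1 y hy), fun n => ?_⟩
  obtain ⟨C, hC⟩ := hf.2 n
  obtain ⟨D, hD⟩ := hg.2 n
  refine ⟨C + D, fun y hy => ?_⟩
  rw [iteratedDeriv_fun_add (cdn (hf.1 y hy) n) (cdn (hg.1 y hy) n), add_mul]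
  exact (abs_add_le _ _).trans (add_le_add (hC y hy) (hD y hy))

lemma SymB.const_mul {m : ℝ} {f : ℝ → ℝ} (hf : SymB m f) (c : ℝ) :
    SymB m (fun y => c * f y) := by
  refine ⟨fun y hy => contDiffAt_const.mul (hf.1 y hy), fun n => ?_⟩
  obtain ⟨C, hC⟩ := hf.2 n
  refine ⟨|c| * C, fun y hy => ?_⟩
  rw [iteratedDeriv_const_mul_field, abs_mul, mul_assoc]
  exact mul_le_mul_of_nonneg_left (hC y hy) (abs_nonneg _)

lemma prod_bound {a b p q y A B : ℝ} (c : ℕ) (hy : 1 ≤ y) (ha : |a| ≤ A * y ^ p)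
    (hb : |b| ≤ B * y ^ q) : |(c : ℝ) * a * b| ≤ (c * A * B) * y ^ (p + q) := by
  rw [abs_mul, abs_mul, Nat.abs_cast, Real.rpow_add (by linarith)]
  have := mul_le_mul ha hb (abs_nonneg _) ((abs_nonneg _).trans ha)
  calc (c : ℝ) * |a| * |b| = c * (|a| * |b|) := by ring
    _ ≤ c * (A * y ^ p * (B * y ^ q)) := by gcongr
    _ = _ := by ring

lemma SymB.mul {m m' : ℝ} {f g : ℝ → ℝ} (hf : SymB m f) (hg : SymB m' g) :
    SymB (m + m') (fun y => f y * g y) := by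
  refine ⟨fun y hy => (hf.1 y hy).mul (hg.1 y hy), fun n => ?_⟩
  choose C hC using hf.2
  choose D hD using hg.2
  refine ⟨∑ i ∈ Finset.range (n + 1), (n.choose i) * C i * D (n - i), fun y hy => ?_⟩
  rw [iteratedDeriv_fun_mul (cdn (hf.1 y hy) n) (cdn (hg.1 y hy) n), Finset.sum_mul]
  refine (Finset.abs_sum_le_sum_abs _ _).trans (Finset.sum_le_sum fun i hi => ?_)
  have hi' : i ≤ n := by simpa [Nat.lt_succ_iff] using hi
  have := prod_bound (n.choose i) hy (hC i y hy) (hD (n - i) y hy)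
  rwa [show m - (i : ℝ) + (m' - ((n - i : ℕ) : ℝ)) = m + m' - n by
    rw [Nat.cast_sub hi']; ring] at this

lemma SymB.zpow (m : ℤ) : SymB (m : ℝ) (fun y => y ^ m) := by
  refine ⟨fun y hy => ?_, fun n => ?_⟩
  · have : y ≠ 0 := by linarith
    exact (analyticAt_id.zpow this).contDiffAt
  · refine ⟨|∏ i ∈ Finset.range n, ((m : ℝ) - i)|, fun y hy => ?_⟩
    have hy0 : 0 < y := by linarith
    rw [iteratedDeriv_eq_iterate, iter_deriv_zpow, abs_mul, abs_of_pos (zpow_pos hy0 _)]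
    rw [← Real.rpow_intCast]
    push_cast
    exact le_rfl

lemma SymB.sqrt {m : ℝ} {f : ℝ → ℝ} (hf : SymB m f) (hpos : ∀ y, 0 < y → 0 < f y)
    {c : ℝ} (hc : 0 < c) (hlow : ∀ y, 1 ≤ y → c * y ^ m ≤ f y) :
    SymB (m / 2) (fun y => √(f y)) := by
  have hsm : ∀ y : ℝ, 1 ≤ y → ContDiffAt ℝ ∞ (fun y => √(f y)) y := fun y hy =>
    (hf.1 y hy).sqrt (hpos y (by linarith)).ne'
  have hsq : ∀ y : ℝ, 1 ≤ y → √(y ^ m) = y ^ (m / 2) := by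
    intro y hy
    rw [Real.sqrt_eq_rpow, ← Real.rpow_mul (by linarith)]
    ring_nf
  refine ⟨hsm, fun n => ?_⟩
  induction n using Nat.strong_induction_on with
  | _ n ih =>
  rcases n with _ | k
  · obtain ⟨C, hC⟩ := hf.2 0
    refine ⟨√C, fun y hy => ?_⟩
    have h1 := hC y hy
    have hC0 := bound_nonneg hy h1
    simp only [iteratedDeriv_zero, Nat.cast_zero, sub_zero] at h1 ⊢
    rw [abs_of_nonneg (Real.sqrt_nonneg _), ← hsq y hy, ← Real.sqrt_mul hC0]
    exact Real.sqrt_le_sqrt ((le_abs_self _).trans h1)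
  · choose! D hD using ih
    obtain ⟨C, hC⟩ := hf.2 (k + 1)
    set S := ∑ i ∈ Finset.range k, ((k + 1).choose (i + 1)) * D (i + 1) * D (k - i) with hS
    refine ⟨(C + S) / (2 * √c), fun y hy => ?_⟩
    have hy0 : 0 < y := by linarith
    set h : ℝ → ℝ := fun y => √(f y) with hh
    have heq : iteratedDeriv (k + 1) f y = iteratedDeriv (k + 1) (fun y => h y * h y) y := by
      apply Filter.EventuallyEq.iteratedDeriv_eq
      filter_upwards [lt_mem_nhds hy0] with z hz
      exact (Real.mul_self_sqrt (hpos z hz).le).symm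
    rw [iteratedDeriv_fun_mul (cdn (hsm y hy) _) (cdn (hsm y hy) _), Finset.sum_range_succ,
      Finset.sum_range_succ'] at heq
    simp only [Nat.choose_self, Nat.choose_zero_right, Nat.cast_one, one_mul, Nat.sub_self,
      Nat.sub_zero, iteratedDeriv_zero, Nat.add_sub_add_right] at heq
    have hrem : |∑ i ∈ Finset.range k, ((k + 1).choose (i + 1) : ℝ) * iteratedDeriv (i + 1) h y
        * iteratedDeriv (k - i) h y| ≤ S * y ^ (m - ((k + 1 : ℕ) : ℝ)) := by
      rw [hS, Finset.sum_mul]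
      refine (Finset.abs_sum_le_sum_abs _ _).trans (Finset.sum_le_sum fun i hi => ?_)
      have hi' : i < k := by simpa using hi
      have := prod_bound ((k + 1).choose (i + 1)) hy (hD (i + 1) (by omega) y hy)
        (hD (k - i) (by omega) y hy)
      rwa [show m / 2 - ((i + 1 : ℕ) : ℝ) + (m / 2 - ((k - i : ℕ) : ℝ)) = m - ((k + 1 : ℕ) : ℝ) by
        rw [Nat.cast_sub hi'.le]; push_cast; ring] at this
    have hCy := hC y hy
    have hkey : 2 * h y * |iteratedDeriv (k + 1) h y| ≤ (C + S) * y ^ (m - ((k + 1 : ℕ) : ℝ)) := by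
      have h0 : 0 ≤ h y := Real.sqrt_nonneg _
      have : 2 * h y * |iteratedDeriv (k + 1) h y| = |2 * h y * iteratedDeriv (k + 1) h y| := by
        rw [abs_mul, abs_of_nonneg (by positivity : 0 ≤ 2 * h y)]
      rw [this, add_mul]
      refine le_trans (le_of_eq ?_) ((abs_sub _ _).trans (add_le_add hCy hrem))
      rw [heq]; congr 1; ring
    have hlowy : √c * y ^ (m / 2) ≤ h y := by
      rw [← hsq y hy, ← Real.sqrt_mul hc.le]
      exact Real.sqrt_le_sqrt (hlow y hy)
    have hcs : 0 < √c := Real.sqrt_pos.2 hc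
    have hyp : 0 < y ^ (m / 2) := Real.rpow_pos_of_pos hy0 _
    have hsplit : y ^ (m - ((k + 1 : ℕ) : ℝ)) = y ^ (m / 2) * y ^ (m / 2 - ((k + 1 : ℕ) : ℝ)) := by
      rw [← Real.rpow_add hy0]; congr 1; ring
    have h3 : 2 * (√c * y ^ (m / 2)) * |iteratedDeriv (k + 1) h y| ≤
        (C + S) * (y ^ (m / 2) * y ^ (m / 2 - ((k + 1 : ℕ) : ℝ))) := by
      rw [← hsplit]
      refine le_trans ?_ hkey
      gcongr
    rw [div_mul_eq_mul_div, le_div_iff₀ (by positivity)]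
    refine le_of_mul_le_mul_left ?_ hyp
    linarith

lemma hasDerivAt_tanh' (y : ℝ) : HasDerivAt Real.tanh (1 - Real.tanh y ^ 2) y := by
  have hc := (Real.cosh_pos y).ne'
  have h := (Real.hasDerivAt_sinh y).div (Real.hasDerivAt_cosh y) hc
  have he : Real.tanh = fun x => Real.sinh x / Real.cosh x := by
    funext x; exact Real.tanh_eq_sinh_div_cosh x
  rw [he]
  refine h.congr_deriv ?_
  field_simp

lemma analyticAt_tanh' (y : ℝ) : AnalyticAt ℝ Real.tanh y := by
  have he : Real.tanh = fun x => Real.sinh x / Real.cosh x := by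
    funext x; exact Real.tanh_eq_sinh_div_cosh x
  rw [he]
  exact Real.analyticAt_sinh.div Real.analyticAt_cosh (Real.cosh_pos y).ne'

lemma iter_tanh (n : ℕ) : ∃ P : Polynomial ℝ, iteratedDeriv (n + 1) Real.tanh =
    fun y => P.eval (Real.tanh y) * (1 - Real.tanh y ^ 2) := by
  induction n with
  | zero =>
    refine ⟨1, ?_⟩
    funext y
    simp [iteratedDeriv_one, (hasDerivAt_tanh' y).deriv]
  | succ n ih =>
    obtain ⟨P, hP⟩ := ih
    refine ⟨Polynomial.derivative P * (1 - Polynomial.X ^ 2) - 2 * Polynomial.X * P, ?_⟩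
    funext y
    rw [iteratedDeriv_succ, hP]
    have h1 := (P.hasDerivAt (Real.tanh y)).comp y (hasDerivAt_tanh' y)
    have h2 := h1.mul (((hasDerivAt_tanh' y).pow 2).const_sub 1)
    refine Eq.trans h2.deriv ?_
    simp
    ring

lemma one_sub_tanh_sq (y : ℝ) : 1 - Real.tanh y ^ 2 = 1 / Real.cosh y ^ 2 := by
  have hc := (Real.cosh_pos y).ne'
  rw [Real.tanh_eq_sinh_div_cosh]
  field_simp
  linarith [Real.cosh_sq y]

lemma symB_tanh : SymB 0 Real.tanh := by
  refine ⟨fun y _ => (analyticAt_tanh' y).contDiffAt, fun n => ?_⟩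
  have habs : ∀ y, Real.tanh y ∈ Set.Icc (-1 : ℝ) 1 := fun y => by
    have := one_sub_tanh_sq y
    have h2 : 0 < 1 / Real.cosh y ^ 2 := by have := Real.cosh_pos y; positivity
    exact abs_le.1 ((sq_le_one_iff_abs_le_one _).1 (by linarith))
  rcases n with _ | n
  · refine ⟨1, fun y hy => ?_⟩
    simpa using abs_le.2 (habs y)
  · obtain ⟨P, hP⟩ := iter_tanh n
    obtain ⟨B, hB⟩ := isCompact_Icc.exists_bound_of_continuousOn
      (s := Set.Icc (-1 : ℝ) 1) (f := fun x => P.eval x) P.continuous.continuousOn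
    refine ⟨B * (4 * (n + 1).factorial), fun y hy => ?_⟩
    have hy0 : 0 < y := by linarith
    rw [hP, abs_mul, mul_assoc, one_sub_tanh_sq]
    have hB' := hB _ (habs y)
    rw [Real.norm_eq_abs] at hB'
    refine mul_le_mul hB' ?_ (abs_nonneg _) ((abs_nonneg _).trans hB')
    have hcp := Real.cosh_pos y
    rw [abs_of_pos (by positivity), zero_sub, Real.rpow_neg hy0.le, Real.rpow_natCast,
      ← div_eq_mul_inv, div_le_div_iff₀ (by positivity) (by positivity)]
    have h1 := Real.pow_div_factorial_le_exp y hy0.le (n + 1)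
    rw [div_le_iff₀ (by positivity)] at h1
    have h2 : Real.exp y ≤ 4 * Real.cosh y ^ 2 := by
      have h3 : Real.exp y ≤ 2 * Real.cosh y := by
        rw [Real.cosh_eq]; linarith [Real.exp_pos (-y)]
      nlinarith [Real.one_le_cosh y]
    have hf : (0 : ℝ) < (n + 1).factorial := by positivity
    nlinarith

/-- Smooth extension of `tanh y / y`. -/
noncomputable def tdiv : ℝ → ℝ := dslope Real.tanh 0

lemma tdiv_of_ne {y : ℝ} (hy : y ≠ 0) : tdiv y = Real.tanh y / y := by
  rw [tdiv, dslope_of_ne _ hy, slope_def_field]; simp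

lemma tdiv_contDiff : ContDiff ℝ ∞ tdiv := by
  rw [contDiff_iff_contDiffAt]
  intro y
  by_cases hy : y = 0
  · subst hy
    obtain ⟨p, hp⟩ := analyticAt_tanh' 0
    exact AnalyticAt.contDiffAt ⟨_, hp.has_fpower_series_dslope_fslope⟩
  · have : AnalyticAt ℝ (fun y => Real.tanh y / y) y := (analyticAt_tanh' y).div analyticAt_id hy
    refine this.contDiffAt.congr_of_eventuallyEq ?_
    filter_upwards [isOpen_ne.mem_nhds hy] with z hz
    exact tdiv_of_ne hz

lemma tanh_pos' {y : ℝ} (hy : 0 < y) : 0 < Real.tanh y := by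
  rw [Real.tanh_eq_sinh_div_cosh]
  exact div_pos (Real.sinh_pos_iff.2 hy) (Real.cosh_pos y)

lemma tdiv_pos (y : ℝ) : 0 < tdiv y := by
  rcases lt_trichotomy y 0 with hy | hy | hy
  · rw [tdiv_of_ne hy.ne]
    have := tanh_pos' (neg_pos.2 hy)
    rw [Real.tanh_neg] at this
    exact div_pos_of_neg_of_neg (by linarith) hy
  · subst hy
    rw [tdiv, dslope_same, (hasDerivAt_tanh' 0).deriv]; simp
  · rw [tdiv_of_ne hy.ne']
    exact div_pos (tanh_pos' hy) hy

lemma tanh_ge {y : ℝ} (hy : 1 ≤ y) : Real.tanh 1 ≤ Real.tanh y := by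
  have : Monotone Real.tanh := monotone_of_hasDerivAt_nonneg hasDerivAt_tanh' (fun y => by
    change 0 ≤ 1 - Real.tanh y ^ 2
    rw [one_sub_tanh_sq]; positivity)
  exact this hy

lemma symB_main (β : ℝ) (hβ : 0 ≤ β) :
    SymB (1 / 2) (fun y => √(Real.tanh y * (y ^ (-1 : ℤ) + β * y ^ (1 : ℤ)))) := by
  have hi := SymB.zpow (-1)
  have h1 := SymB.zpow 1
  push_cast at hi h1
  have ht1 := tanh_pos' one_pos
  have hpos : ∀ y : ℝ, 0 < y → 0 < Real.tanh y * (y ^ (-1 : ℤ) + β * y ^ (1 : ℤ)) := fun y hy => by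
    have := tanh_pos' hy
    positivity
  rcases hβ.eq_or_lt with h0 | hb
  · have hK : SymB (-1) (fun y => Real.tanh y * (y ^ (-1 : ℤ) + β * y ^ (1 : ℤ))) := by
      have := symB_tanh.mul hi
      rw [zero_add] at this
      simpa [← h0] using this
    refine (hK.sqrt hpos ht1 fun y hy => ?_).mono (by norm_num)
    have hy0 : 0 < y := by linarith
    rw [← h0, zero_mul, add_zero, Real.rpow_neg_one, zpow_neg_one]
    gcongr
    exact tanh_ge hy
  · have hK : SymB 1 (fun y => Real.tanh y * (y ^ (-1 : ℤ) + β * y ^ (1 : ℤ))) := by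
      have := symB_tanh.mul ((hi.mono (by norm_num : (-1 : ℝ) ≤ 1)).add (h1.const_mul β))
      rwa [zero_add] at this
    refine hK.sqrt hpos (mul_pos ht1 hb) fun y hy => ?_
    have hy0 : 0 < y := by linarith
    rw [Real.rpow_one, zpow_one, mul_assoc]
    have := tanh_ge hy
    have h5 : 0 < y ^ (-1 : ℤ) := by positivity
    exact mul_le_mul this (by linarith) (by positivity) (by linarith)

/-- The rescaled symbol, smooth on all of `ℝ`. -/
noncomputable def Gfun (β y : ℝ) : ℝ := √(tdiv y * (1 + β * y ^ 2))

lemma Gfun_contDiff (β : ℝ) (hβ : 0 ≤ β) : ContDiff ℝ ∞ (Gfun β) := by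
  unfold Gfun
  refine ContDiff.sqrt (tdiv_contDiff.mul (by fun_prop)) fun y => ?_
  have := tdiv_pos y
  positivity

lemma Gfun_bound (n : ℕ) (β : ℝ) (hβ : 0 ≤ β) : ∃ C > 0, ∀ y : ℝ, 0 < y →
    |iteratedDeriv n (Gfun β) y| ≤ C * (1 + y ^ 2) ^ ((1 - 2 * (n : ℝ)) / 4) := by
  set p : ℝ := (1 - 2 * (n : ℝ)) / 4 with hp
  have hw : ∀ y : ℝ, 0 < (1 + y ^ 2) ^ p := fun y => Real.rpow_pos_of_pos (by positivity) _
  have hwc : Continuous fun y : ℝ => (1 + y ^ 2) ^ p :=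
    Continuous.rpow_const (by fun_prop) fun y => Or.inl (by positivity)
  have hGc : Continuous (iteratedDeriv n (Gfun β)) :=
    (Gfun_contDiff β hβ).continuous_iteratedDeriv n (by exact_mod_cast le_top)
  obtain ⟨A, hA⟩ := isCompact_Icc.exists_bound_of_continuousOn (s := Set.Icc (0 : ℝ) 1)
    (f := fun y => iteratedDeriv n (Gfun β) y / (1 + y ^ 2) ^ p)
    (hGc.div hwc fun y => (hw y).ne').continuousOn
  obtain ⟨D, hD⟩ := (symB_main β hβ).2 n
  have hD0 : 0 ≤ D := bound_nonneg le_rfl (hD 1 le_rfl)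
  refine ⟨|A| + D * 2 ^ |p| + 1, by positivity, fun y hy => ?_⟩
  have hwy := hw y
  rcases le_total y 1 with h | h
  · have h1 := hA y ⟨hy.le, h⟩
    rw [Real.norm_eq_abs, abs_div, abs_of_pos hwy, div_le_iff₀ hwy] at h1
    refine h1.trans ?_
    gcongr
    have : 0 ≤ D * 2 ^ |p| := by positivity
    linarith [le_abs_self A]
  · have heq : iteratedDeriv n (Gfun β) y = iteratedDeriv n
        (fun y => √(Real.tanh y * (y ^ (-1 : ℤ) + β * y ^ (1 : ℤ)))) y := by
      apply Filter.EventuallyEq.iteratedDeriv_eq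
      filter_upwards [lt_mem_nhds hy] with z hz
      rw [Gfun, tdiv_of_ne hz.ne', zpow_neg_one, zpow_one]
      congr 1
      field_simp
    rw [heq]
    refine (hD y h).trans ?_
    have hyp : y ^ (1 / 2 - (n : ℝ)) = (y ^ 2) ^ p := by
      rw [← Real.rpow_natCast, ← Real.rpow_mul hy.le]
      congr 1
      rw [hp]; push_cast; ring
    have hcmp : (y ^ 2) ^ p ≤ 2 ^ |p| * (1 + y ^ 2) ^ p := by
      have h1y : 1 ≤ y ^ 2 := one_le_pow₀ h
      rcases le_total 0 p with hp0 | hp0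
      · have h2 : (y ^ 2) ^ p ≤ (1 + y ^ 2) ^ p :=
          Real.rpow_le_rpow (by positivity) (by linarith) hp0
        have h3 : (1 : ℝ) ≤ 2 ^ |p| := Real.one_le_rpow (by norm_num) (abs_nonneg _)
        nlinarith
      · have h2 : (2 * y ^ 2) ^ p ≤ (1 + y ^ 2) ^ p :=
          Real.rpow_le_rpow_of_nonpos (by positivity) (by linarith) hp0
        rw [Real.mul_rpow (by norm_num) (by positivity)] at h2
        rw [abs_of_nonpos hp0, Real.rpow_neg (by norm_num), inv_mul_eq_div,
          le_div_iff₀ (by positivity)]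
        linarith
    rw [hyp]
    calc D * (y ^ 2) ^ p ≤ D * (2 ^ |p| * (1 + y ^ 2) ^ p) := by gcongr
      _ = (D * 2 ^ |p|) * (1 + y ^ 2) ^ p := by ring
      _ ≤ _ := by
        gcongr
        linarith [abs_nonneg A]

theorem iteratedDeriv_sqrt_Kpos_bound (n : ℕ) (β : ℝ) (hβ : 0 ≤ β) :
    ∃ C > 0, ∀ μ : ℝ, 0 < μ → ∀ ξ : ℝ, 0 < ξ →
      |iteratedDeriv n (fun x => Real.sqrt (Kpos β μ x)) ξ| ≤
        C * μ ^ ((n : ℝ)/2) * (1 + μ * ξ ^ 2) ^ ((1 - 2 * (n : ℝ))/4) := by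
  obtain ⟨C, hC, hb⟩ := Gfun_bound n β hβ
  refine ⟨C, hC, fun μ hμ ξ hξ => ?_⟩
  have hs : 0 < √μ := Real.sqrt_pos.2 hμ
  have hsq : ∀ x : ℝ, (√μ * x) ^ 2 = μ * x ^ 2 := fun x => by
    rw [mul_pow, Real.sq_sqrt hμ.le]
  have heq : iteratedDeriv n (fun x => Real.sqrt (Kpos β μ x)) ξ =
      iteratedDeriv n (fun x => Gfun β (√μ * x)) ξ := by
    apply Filter.EventuallyEq.iteratedDeriv_eq
    filter_upwards [lt_mem_nhds hξ] with z hz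
    rw [Gfun, tdiv_of_ne (by positivity), hsq, Kpos, Tpos, mul_assoc β]
  rw [heq, iteratedDeriv_comp_const_mul
    ((Gfun_contDiff β hβ).of_le (by exact_mod_cast le_top))]
  have h1 := hb (√μ * ξ) (by positivity)
  rw [hsq] at h1
  have h2 : √μ ^ n = μ ^ ((n : ℝ) / 2) := by
    rw [Real.sqrt_eq_rpow, ← Real.rpow_natCast, ← Real.rpow_mul hμ.le]
    congr 1; ring
  simp only [abs_mul]
  rw [abs_of_pos (by positivity : 0 < √μ ^ n), h2]
  calc _ ≤ μ ^ ((n : ℝ) / 2) * (C * (1 + μ * ξ ^ 2) ^ ((1 - 2 * (n : ℝ))/4)) := by gcongr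
    _ = _ := by ring
end

section
/- For every n ∈ ℕ there exists a constant C > 0 (depending only on n) such that for all μ with 0 < μ ≤ 1 and all ξ > 0, one has ⟨ξ⟩^{n} · | dⁿ/dξⁿ ( √(T_μ(ξ))·(1+μξ²)^{1/4} ) | ≤ C. (In other words, √(T_μ)·⟨√μ ·⟩^{1/2} belongs to the symbol class S⁰ with seminorms bounded uniformly in μ ∈ (0,1].) -/
open scoped ContDiff Topology

lemma aux_analyticAt_dslope {f : ℝ → ℝ} (hf : AnalyticAt ℝ f 0) :
    AnalyticAt ℝ (dslope f 0) 0 := by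
  obtain ⟨p, hp⟩ := hf
  exact ⟨_, hp.has_fpower_series_dslope_fslope⟩

/-- Smooth extension of `sinh y / y`. -/
noncomputable def auxS (y : ℝ) : ℝ := dslope Real.sinh 0 y

lemma auxS_of_ne {y : ℝ} (hy : y ≠ 0) : auxS y = Real.sinh y / y := by
  rw [auxS, dslope_of_ne _ hy, slope_def_field]
  simp

lemma auxS_contDiff : ContDiff ℝ ∞ auxS := by
  rw [contDiff_iff_contDiffAt]
  intro y
  by_cases hy : y = 0
  · subst hy
    exact (aux_analyticAt_dslope Real.analyticAt_sinh).contDiffAt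
  · have h1 : ContDiffAt ℝ ∞ (fun y : ℝ => Real.sinh y / y) y :=
      (Real.contDiff_sinh.contDiffAt).div contDiffAt_id hy
    refine h1.congr_of_eventuallyEq ?_
    filter_upwards [isOpen_ne.mem_nhds hy] with z hz
    exact auxS_of_ne hz

lemma auxS_pos (y : ℝ) : 0 < auxS y := by
  rcases lt_trichotomy y 0 with h | h | h
  · rw [auxS_of_ne h.ne]
    exact div_pos_of_neg_of_neg (Real.sinh_neg_iff.2 h) h
  · subst h
    simp [auxS]
  · rw [auxS_of_ne h.ne']
    exact div_pos (Real.sinh_pos_iff.2 h) h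

/-- Smooth extension of `√(tanh y / y) (1+y²)^{1/4}`. -/
noncomputable def auxG (y : ℝ) : ℝ :=
  Real.sqrt (auxS y / Real.cosh y) * (1 + y ^ 2) ^ ((1:ℝ)/4)

lemma auxW_contDiff : ContDiff ℝ ∞ (fun y : ℝ => (1 + y ^ 2) ^ ((1:ℝ)/4)) := by
  refine ContDiff.rpow_const_of_ne (by fun_prop) ?_
  intro x
  positivity

lemma auxG_contDiff : ContDiff ℝ ∞ auxG := by
  refine ContDiff.mul (ContDiff.sqrt (auxS_contDiff.div Real.contDiff_cosh ?_) ?_) auxW_contDiff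
  · exact fun x => (Real.cosh_pos x).ne'
  · exact fun x => (div_pos (auxS_pos x) (Real.cosh_pos x)).ne'

lemma auxG_eq {y : ℝ} (hy : 0 < y) :
    auxG y = Real.sqrt (Real.tanh y / y) * (1 + y ^ 2) ^ ((1:ℝ)/4) := by
  rw [auxG, auxS_of_ne hy.ne', Real.tanh_eq_sinh_div_cosh, div_right_comm]

/-- `auxG` in the variable `1/y`. -/
noncomputable def auxH (s : ℝ) : ℝ :=
  Real.sqrt ((1 - expNegInvGlue (s / 2)) / (1 + expNegInvGlue (s / 2))) *
    (1 + s ^ 2) ^ ((1:ℝ)/4)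

lemma aux_glue_lt (x : ℝ) : expNegInvGlue x < 1 := by
  unfold expNegInvGlue
  split_ifs with h
  · exact one_pos
  · rw [Real.exp_lt_one_iff]
    push Not at h
    simpa using h

lemma auxH_contDiff : ContDiff ℝ ∞ auxH := by
  have hE : ContDiff ℝ ∞ (fun s : ℝ => expNegInvGlue (s / 2)) :=
    (expNegInvGlue.contDiff (n := ⊤)).comp (by fun_prop)
  have h1 : ∀ s : ℝ, 0 < 1 + expNegInvGlue (s / 2) := fun s => by
    have := expNegInvGlue.nonneg (s / 2)
    linarith
  have h2 : ∀ s : ℝ, 0 < 1 - expNegInvGlue (s / 2) := fun s => by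
    have := aux_glue_lt (s / 2)
    linarith
  refine ContDiff.mul (ContDiff.sqrt (ContDiff.div (contDiff_const.sub hE)
    (contDiff_const.add hE) ?_) ?_) auxW_contDiff
  · exact fun x => (h1 x).ne'
  · exact fun x => (div_pos (h2 x) (h1 x)).ne'

lemma aux_tanh {y : ℝ} (hy : 0 < y) : Real.tanh y =
    (1 - expNegInvGlue (y⁻¹ / 2)) / (1 + expNegInvGlue (y⁻¹ / 2)) := by
  have h : ¬ (y⁻¹ / 2 ≤ 0) := by
    push Not
    positivity
  have h2 : -(y⁻¹ / 2)⁻¹ = -y + -y := by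
    field_simp
    ring
  rw [expNegInvGlue, if_neg h, h2, Real.exp_add, Real.tanh_eq_sinh_div_cosh, Real.sinh_eq,
    Real.cosh_eq]
  have h3 : Real.exp y * Real.exp (-y) = 1 := by rw [← Real.exp_add]; simp
  have := Real.exp_pos y
  have := Real.exp_pos (-y)
  rw [div_eq_div_iff (by positivity) (by positivity)]
  generalize Real.exp y = a at *
  generalize Real.exp (-y) = b at *
  linear_combination b * h3

lemma auxG_eq_H {y : ℝ} (hy : 0 < y) : auxG y = auxH y⁻¹ := by
  have ht : 0 < Real.tanh y := by
    rw [Real.tanh_eq_sinh_div_cosh]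
    exact div_pos (Real.sinh_pos_iff.2 hy) (Real.cosh_pos y)
  rw [auxG_eq hy, auxH, ← aux_tanh hy, Real.sqrt_div ht.le, div_mul_eq_mul_div, mul_div_assoc]
  congr 1
  have h1 : 1 + y⁻¹ ^ 2 = (1 + y ^ 2) / y ^ 2 := by
    field_simp
    ring
  have h2 : Real.sqrt y = (y ^ 2) ^ ((1:ℝ)/4) := by
    rw [Real.sqrt_eq_rpow, ← Real.rpow_natCast, ← Real.rpow_mul hy.le]
    norm_num
  rw [h1, Real.div_rpow (by positivity) (by positivity), h2]

lemma aux_iter (n : ℕ) : ∃ K : ℝ → ℝ, ContDiff ℝ ∞ K ∧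
    ∀ y : ℝ, 0 < y → iteratedDeriv n auxG y = y⁻¹ ^ n * K y⁻¹ := by
  induction n with
  | zero => exact ⟨auxH, auxH_contDiff, fun y hy => by simp [auxG_eq_H hy]⟩
  | succ n ih =>
    obtain ⟨K, hK, h⟩ := ih
    have hK' : ContDiff ℝ ∞ (deriv K) := ((contDiff_infty_iff_deriv).1 hK).2
    refine ⟨fun s => -(n * K s + s * deriv K s),
      ((contDiff_const.mul hK).add (contDiff_id.mul hK')).neg, fun y hy => ?_⟩
    rw [iteratedDeriv_succ]
    have he : iteratedDeriv n auxG =ᶠ[𝓝 y] fun y => y⁻¹ ^ n * K y⁻¹ := by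
      filter_upwards [isOpen_Ioi.mem_nhds (Set.mem_Ioi.2 hy)] with z hz
      exact h z hz
    rw [he.deriv_eq]
    have hi := hasDerivAt_inv hy.ne'
    have hd : HasDerivAt K (deriv K y⁻¹) y⁻¹ :=
      (hK.differentiable (by simp) y⁻¹).hasDerivAt
    have hc := hd.comp y hi
    have hm := (hi.pow n).mul hc
    have hfin := hm.deriv
    refine Eq.trans hfin ?_
    rcases n with _ | n
    · simp
      field_simp
    · simp
      field_simp
      ring

lemma aux_bound (n : ℕ) : ∃ C > 0, ∀ y : ℝ, 0 < y →
    (1 + y ^ 2) ^ ((n : ℝ)/2) * |iteratedDeriv n auxG y| ≤ C := by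
  obtain ⟨K, hK, h⟩ := aux_iter n
  have hcG : Continuous (iteratedDeriv n auxG) :=
    auxG_contDiff.continuous_iteratedDeriv n (by exact_mod_cast le_top)
  obtain ⟨A, hA⟩ := (isCompact_Icc (a := (0:ℝ)) (b := 1)).exists_bound_of_continuousOn
    hcG.continuousOn
  obtain ⟨B, hB⟩ := (isCompact_Icc (a := (0:ℝ)) (b := 1)).exists_bound_of_continuousOn
    hK.continuous.continuousOn
  have hA0 : 0 ≤ A := (norm_nonneg _).trans (hA 0 (by simp))
  have hB0 : 0 ≤ B := (norm_nonneg _).trans (hB 0 (by simp))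
  refine ⟨2 ^ ((n : ℝ)/2) * (A + B + 1), by positivity, fun y hy => ?_⟩
  rcases le_total y 1 with h1 | h1
  · have h2 := hA y ⟨hy.le, h1⟩
    rw [Real.norm_eq_abs] at h2
    gcongr
    · nlinarith
    · linarith
  · have h2 := hB y⁻¹ ⟨by positivity, inv_le_one_of_one_le₀ h1⟩
    rw [Real.norm_eq_abs] at h2
    rw [h y hy, abs_mul, abs_of_pos (by positivity : 0 < y⁻¹ ^ n), ← mul_assoc]
    have h3 : (1 + y ^ 2) ^ ((n : ℝ)/2) ≤ 2 ^ ((n : ℝ)/2) * y ^ n := by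
      have h4 : y ^ n = (y ^ 2) ^ ((n : ℝ)/2) := by
        rw [← Real.rpow_natCast y 2, ← Real.rpow_mul hy.le, ← Real.rpow_natCast]
        congr 1
        push_cast
        ring
      rw [h4, ← Real.mul_rpow (by norm_num) (by positivity)]
      gcongr
      nlinarith
    have h5 : (1 + y ^ 2) ^ ((n : ℝ)/2) * y⁻¹ ^ n ≤ 2 ^ ((n : ℝ)/2) := by
      calc _ ≤ 2 ^ ((n : ℝ)/2) * y ^ n * y⁻¹ ^ n := by gcongr
        _ = _ := by rw [mul_assoc, ← mul_pow, mul_inv_cancel₀ hy.ne']; simp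
    gcongr
    linarith

theorem sqrtT_Jmu_symbol_class (n : ℕ) :
    ∃ C > 0, ∀ μ : ℝ, 0 < μ → μ ≤ 1 → ∀ ξ : ℝ, 0 < ξ →
      (1 + ξ ^ 2) ^ ((n : ℝ)/2) *
        |iteratedDeriv n
          (fun x => Real.sqrt (Tpos μ x) * (1 + μ * x ^ 2) ^ ((1:ℝ)/4)) ξ| ≤ C := by
  obtain ⟨C, hC, hb⟩ := aux_bound n
  refine ⟨C, hC, fun μ hμ hμ1 ξ hξ => ?_⟩
  have hs : 0 < Real.sqrt μ := Real.sqrt_pos.2 hμ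
  have hsq : Real.sqrt μ ^ 2 = μ := Real.sq_sqrt hμ.le
  have he : (fun x => Real.sqrt (Tpos μ x) * (1 + μ * x ^ 2) ^ ((1:ℝ)/4)) =ᶠ[𝓝 ξ]
      fun x => auxG (Real.sqrt μ * x) := by
    filter_upwards [isOpen_Ioi.mem_nhds (Set.mem_Ioi.2 hξ)] with x hx
    rw [auxG_eq (mul_pos hs hx), mul_pow, hsq, Tpos]
  rw [he.iteratedDeriv_eq n,
    iteratedDeriv_comp_const_mul (auxG_contDiff.of_le (by exact_mod_cast le_top))]
  refine le_trans ?_ (hb (Real.sqrt μ * ξ) (mul_pos hs hξ))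
  simp only [abs_mul]
  rw [← mul_assoc]
  gcongr
  rw [abs_of_pos (by positivity)]
  have h4 : Real.sqrt μ ^ n = μ ^ ((n : ℝ)/2) := by
    rw [Real.sqrt_eq_rpow, ← Real.rpow_natCast, ← Real.rpow_mul hμ.le]
    congr 1
    ring
  rw [h4, ← Real.mul_rpow (by positivity) hμ.le]
  gcongr
  rw [mul_pow, hsq]
  nlinarith
end
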